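/- For all positive integers t and m, the number of pairs (W, f), where W is a partial Dyck word with exactly t zeros in which every descent has length exactly 2, and f is a function assigning to each descent of W an integer in {1, …, m}, is at most 2 · 4^t · m^{⌊t/2⌋}. -/

import Mathlib

/-- Every prefix of `w` has at least as many zeros (`false`) as ones (`true`). -/
def DyckPrefixCond (w : List Bool) : Prop :=
  ∀ p : List Bool, p <+: w → p.count true ≤ p.count false

/-- `MaxTrueRun w i m` means that the positions `i, i+1, …, i+m-1` of `w` form a maximal run
of consecutive ones (`true`), i.e. a descent of length `m` starting at position `i`. -/
def MaxTrueRun (w : List Bool) (i m : ℕ) : Prop :=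
  0 < m ∧ i + m ≤ w.length ∧
  (∀ j : ℕ, i ≤ j → j < i + m → w[j]? = some true) ∧
  (i = 0 ∨ w[i - 1]? = some false) ∧
  (i + m = w.length ∨ w[i + m]? = some false)

/-!
Distinct descents are disjoint, so a word with at most `s` ones, all of whose descents have length
at least `d`, has at most `s / d` descents and hence at most `m ^ (s / d)` labellings of them.
There are fewer than `2 ^ (N + 1)` binary words of length at most `N`; taking `N = 2 * t`, `s = t`
and `d = 2` gives the bound.
-/

open Finset

section Counting

variable {α β ι M : Type*}

theorem card_le_count_of_getElem?_eq [BEq α] [LawfulBEq α] {w : List α} {a : α} {S : Finset ℕ}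
    (hS : ∀ j ∈ S, w[j]? = some a) : #S ≤ w.count a := by
  have hsub : S ⊆ (w.idxsOf a).toFinset := fun j hj ↦ by
    obtain ⟨hlt, hget⟩ := List.getElem?_eq_some_iff.1 (hS j hj)
    exact List.mem_toFinset.2 ((List.mem_idxsOf_iff_getElem_pos hlt).2 (beq_iff_eq.2 hget))
  calc #S ≤ #(w.idxsOf a).toFinset := card_le_card hsub
    _ ≤ (w.idxsOf a).length := List.toFinset_card_le _
    _ = w.count a := List.length_idxsOf

theorem ncard_setOf_length_eq (α : Type*) [Fintype α] (n : ℕ) :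
    {w : List α | w.length = n}.ncard = Fintype.card α ^ n := by
  rw [← card_vector, ← Nat.card_eq_fintype_card]
  rfl

theorem ncard_setOf_length_lt (α : Type*) [Fintype α] (n : ℕ) :
    {w : List α | w.length < n}.ncard = ∑ k ∈ range n, Fintype.card α ^ k := by
  induction n with
  | zero => simp
  | succ n ih =>
    have hsplit : {w : List α | w.length < n + 1} =
        {w | w.length < n} ∪ {w | w.length = n} := by
      ext w
      exact Nat.lt_succ_iff_lt_or_eq
    have hdisj : Disjoint {w : List α | w.length < n} {w | w.length = n} :=
      Set.disjoint_left.2 fun _ hlt heq ↦ hlt.ne heq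
    rw [hsplit, Set.ncard_union_eq hdisj (List.finite_length_lt α n) (List.finite_length_eq α n),
      ih, ncard_setOf_length_eq, sum_range_succ]

theorem ncard_setOf_length_lt_lt_pow (α : Type*) [Fintype α] (hα : 2 ≤ Fintype.card α) (n : ℕ) :
    {w : List α | w.length < n}.ncard < Fintype.card α ^ n := by
  rw [ncard_setOf_length_lt]
  exact Nat.geomSum_lt hα fun _ ↦ mem_range.1

/-- The labellings of the points of `S` by elements of `T`, encoded as functions on the whole
type that vanish outside `S`. -/
noncomputable def labelings [Zero M] (S : Finset ι) (T : Finset M) : Finset (ι → M) :=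
  (S.finsupp fun _ ↦ T).map ⟨(⇑), DFunLike.coe_injective⟩

theorem mem_labelings [Zero M] {S : Finset ι} {T : Finset M} {f : ι → M} :
    f ∈ labelings S T ↔ (∀ i ∈ S, f i ∈ T) ∧ ∀ i ∉ S, f i = 0 := by
  simp only [labelings, mem_map, mem_finsupp_iff, Function.Embedding.coeFn_mk]
  constructor
  · rintro ⟨g, ⟨hsupp, hT⟩, rfl⟩
    exact ⟨hT, fun i hi ↦ Finsupp.notMem_support_iff.1 fun h ↦ hi (hsupp h)⟩
  · rintro ⟨hT, hzero⟩
    exact ⟨Finsupp.onFinset S f fun i ↦ not_imp_comm.1 (hzero i),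
      ⟨Finsupp.support_onFinset_subset, hT⟩, rfl⟩

theorem card_labelings [Zero M] (S : Finset ι) (T : Finset M) :
    #(labelings S T) = #T ^ #S := by
  rw [labelings, card_map, card_finsupp, prod_const]

theorem finite_and_ncard_le_of_card_fibers_le {P : Set (α × β)} (A : Finset α)
    (F : α → Finset β) {n : ℕ}
    (hP : ∀ p ∈ P, p.1 ∈ A ∧ p.2 ∈ F p.1) (hF : ∀ a ∈ A, #(F a) ≤ n) :
    P.Finite ∧ P.ncard ≤ #A * n := by
  classical
  let B : Finset (α × β) := A.biUnion fun a ↦ {a} ×ˢ F a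
  have hPB : P ⊆ B := fun p hp ↦
    mem_coe.2 <| mem_biUnion.2
      ⟨p.1, (hP p hp).1, mem_product.2 ⟨mem_singleton_self _, (hP p hp).2⟩⟩
  refine ⟨B.finite_toSet.subset hPB, ?_⟩
  calc P.ncard ≤ (B : Set (α × β)).ncard := Set.ncard_le_ncard hPB B.finite_toSet
    _ = #B := Set.ncard_coe_finset B
    _ ≤ #A * n := card_biUnion_le_card_mul _ _ _ fun a ha ↦ by
      rw [card_product, card_singleton, one_mul]
      exact hF a ha

end Counting

section Descents

variable {w : List Bool}

theorem MaxTrueRun.add_le_of_lt {i j k l : ℕ} (hi : MaxTrueRun w i k) (hj : MaxTrueRun w j l)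
    (hij : i < j) : i + k ≤ j := by
  obtain ⟨-, -, hones, -, -⟩ := hi
  obtain ⟨-, -, -, hstart, -⟩ := hj
  by_contra! hlt
  have hone : w[j - 1]? = some true := hones (j - 1) (by omega) (by omega)
  have hzero : w[j - 1]? = some false := hstart.resolve_left (by omega)
  simp [hone] at hzero

open Classical in
/-- The starting positions of the descents of `w`; they stand for the descents themselves. -/
noncomputable def descentStarts (w : List Bool) : Finset ℕ :=
  {i ∈ range w.length | ∃ l, MaxTrueRun w i l}

theorem mem_descentStarts {i : ℕ} : i ∈ descentStarts w ↔ ∃ l, MaxTrueRun w i l := by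
  simp only [descentStarts, mem_filter, mem_range, and_iff_right_iff_imp]
  rintro ⟨l, hpos, hle, -⟩
  omega

theorem card_descentStarts_mul_le_count {d : ℕ} (hd : ∀ i l, MaxTrueRun w i l → d ≤ l) :
    #(descentStarts w) * d ≤ w.count true := by
  have hdisj : (descentStarts w : Set ℕ).PairwiseDisjoint fun i ↦ Ico i (i + d) := by
    have hlt : ∀ i ∈ descentStarts w, ∀ j ∈ descentStarts w, i < j →
        Disjoint (Ico i (i + d)) (Ico j (j + d)) := fun i hi j hj hij ↦ by
      obtain ⟨k, hk⟩ := mem_descentStarts.1 hi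
      obtain ⟨l, hl⟩ := mem_descentStarts.1 hj
      have hid : i + d ≤ j := (Nat.add_le_add_left (hd i k hk) i).trans (hk.add_le_of_lt hl hij)
      exact disjoint_left.2 fun x hx hx' ↦
        ((mem_Ico.1 hx).2.trans_le hid).not_ge (mem_Ico.1 hx').1
    intro i hi j hj hne
    exact hne.lt_or_gt.elim (hlt i hi j hj) fun hji ↦ (hlt j hj i hi hji).symm
  have hones : ∀ x ∈ (descentStarts w).biUnion fun i ↦ Ico i (i + d), w[x]? = some true := by
    intro x hx
    obtain ⟨i, hi, hxi⟩ := mem_biUnion.1 hx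
    obtain ⟨l, hl⟩ := mem_descentStarts.1 hi
    obtain ⟨hix, hxd⟩ := mem_Ico.1 hxi
    exact hl.2.2.1 x hix (hxd.trans_le (Nat.add_le_add_left (hd i l hl) i))
  calc #(descentStarts w) * d = #((descentStarts w).biUnion fun i ↦ Ico i (i + d)) := by
        simp [card_biUnion hdisj]
    _ ≤ w.count true := card_le_count_of_getElem?_eq hones

end Descents

theorem count_weighted_partial_dyck_general (s t d m : ℕ) (hd : 0 < d) (hm : 0 < m) :
    let P : Set (List Bool × (ℕ → ℕ)) := {p |
      p.1.count false ≤ t ∧ p.1.count true ≤ s ∧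
      (∀ i l : ℕ, MaxTrueRun p.1 i l → d ≤ l) ∧
      (∀ i : ℕ, (∃ l : ℕ, MaxTrueRun p.1 i l) → p.2 i ∈ Icc 1 m) ∧
      (∀ i : ℕ, (¬ ∃ l : ℕ, MaxTrueRun p.1 i l) → p.2 i = 0)}
    P.Finite ∧ P.ncard ≤ 2 ^ (s + t + 1) * m ^ (s / d) := by
  intro P
  let A : Finset (List Bool) :=
    {w ∈ (List.finite_length_lt Bool (s + t + 1)).toFinset | #(descentStarts w) ≤ s / d}
  have hA : #A ≤ 2 ^ (s + t + 1) := by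
    refine (card_filter_le _ _).trans ?_
    rw [← Set.ncard_eq_toFinset_card _ (List.finite_length_lt Bool _)]
    exact (ncard_setOf_length_lt_lt_pow Bool Fintype.card_bool.ge _).le
  have hP : ∀ p ∈ P, p.1 ∈ A ∧ p.2 ∈ labelings (descentStarts p.1) (Icc 1 m) := by
    rintro ⟨w, f⟩ ⟨hzeros, hones, hruns, hlabel, hdefault⟩
    have hlength : w.length < s + t + 1 := by
      rw [← List.count_true_add_count_false w]
      exact Nat.lt_succ_of_le (Nat.add_le_add hones hzeros)
    have hstarts : #(descentStarts w) ≤ s / d :=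
      (Nat.le_div_iff_mul_le hd).2 ((card_descentStarts_mul_le_count hruns).trans hones)
    exact ⟨mem_filter.2 ⟨(Set.Finite.mem_toFinset _).2 hlength, hstarts⟩,
      mem_labelings.2 ⟨fun i hi ↦ hlabel i (mem_descentStarts.1 hi),
        fun i hi ↦ hdefault i (mt mem_descentStarts.2 hi)⟩⟩
  have hlabelings : ∀ w ∈ A, #(labelings (descentStarts w) (Icc 1 m)) ≤ m ^ (s / d) := by
    intro w hw
    rw [card_labelings, Nat.card_Icc, Nat.add_sub_cancel]
    exact Nat.pow_le_pow_right hm (mem_filter.1 hw).2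
  obtain ⟨hfinite, hcard⟩ := finite_and_ncard_le_of_card_fibers_le A _ hP hlabelings
  exact ⟨hfinite, hcard.trans (Nat.mul_le_mul_right _ hA)⟩

/-- For positive integers `t` and `m`, the number of pairs `(W, f)`, where `W` is a partial
Dyck word with exactly `t` zeros whose descents all have length `2`, and `f` assigns to each
descent of `W` (identified with its starting position) an integer in `{1, …, m}` (and `0`
elsewhere), is at most `2 · 4^t · m^⌊t/2⌋`. -/
theorem count_weighted_partial_dyck (t m : ℕ) (ht : 0 < t) (hm : 0 < m) :
    Set.ncard {p : List Bool × (ℕ → ℕ) |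
        p.1.count false = t ∧ p.1.count true ≤ t ∧ DyckPrefixCond p.1 ∧
        (∀ i l : ℕ, MaxTrueRun p.1 i l → l = 2) ∧
        (∀ i : ℕ, (∃ l : ℕ, MaxTrueRun p.1 i l) → p.2 i ∈ Finset.Icc 1 m) ∧
        (∀ i : ℕ, (¬ ∃ l : ℕ, MaxTrueRun p.1 i l) → p.2 i = 0)} ≤
      2 * 4 ^ t * m ^ (t / 2) := by
  obtain ⟨hfinite, hcard⟩ := count_weighted_partial_dyck_general t t 2 m two_pos hm
  rw [show 2 * 4 ^ t = 2 ^ (t + t + 1) by rw [← two_mul, pow_succ', pow_mul]; norm_num]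
  refine (Set.ncard_le_ncard ?_ hfinite).trans hcard
  rintro p ⟨hzeros, hones, -, hruns, hlabels⟩
  exact ⟨hzeros.le, hones, fun i l h ↦ (hruns i l h).ge, hlabels⟩
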